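/- Let Ω ⊆ ℂ^{m1×m2} be a nonempty cone (i.e., M ∈ Ω and σ > 0 real imply σM ∈ Ω), let Ω_B = Ω ∩ {M : ‖M‖_F ≤ 1}, let M0 ∈ Ω, and let n be a positive integer with 2n > lower Minkowski dimension of Ω_B. Then for Lebesgue-almost all tuples a_1, …, a_n ∈ ℂ^{m1} and b_1, …, b_n ∈ ℂ^{m2}, any M ∈ Ω satisfying a_j* M (conj b_j) = a_j* M0 (conj b_j) for all j = 1, …, n must equal M0. (Weak identifiability of cone-constrained matrix recovery from rank-one measurements.) -/

import Mathlib

/-!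
For a fixed `X ≠ 0` the measurement `a* X (conj b)` is rarely small: if `a` and `b` range over
polydiscs, then `|a* X (conj b)| ≤ δ` has measure `O(δ ^ s)` for every `s < 2`, uniformly over
`‖X‖ ≥ η` (`exists_smallBall`). This is Markov's inequality for the moment of order `-s`, which is
finite because `‖z‖ ^ (-s)` is locally integrable on `ℂ`: integrating out one coordinate `a i` of
`a` replaces the measurement by the coefficient `(X (conj b)) i`, and integrating out one coordinate
`b j` of `b` replaces that by the entry `X (i, j)`, where `(i, j)` is chosen with `|X (i, j)|`
bounded below. The exponent `s < 2` costs nothing since the dimension hypothesis is strict, and it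
avoids the logarithm that the sharp estimate at `s = 2` would carry.

The pairs `(a_j, b_j)` being independent, all `n` measurements of `X` are at most `δ` with measure
`O(δ ^ (s * n))`. The cone property reduces the witnesses `M` with `‖M‖ ≤ K` to a rescaled copy of
`Ω_B`, which at arbitrarily small scales `ρ` is covered by `ρ ^ (-d)` balls, for some `d < 2 * n`
(`frequently_coveringNumber_le`). If `M` is within `K * ρ` of `K • c` and has the same measurements
as `M0`, the measurements of `K • c - M0` are `O(ρ)`, so the union bound over the centers `c`
(`tupleMeasure_badSet_le`) gives the exceptional set measure `O(ρ ^ (s * n - d))`, and this tends to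
`0` once `d / n < s < 2`. A countable union over the cutoffs `R`, `K`, `η` finishes the argument.
-/

open MeasureTheory Filter

/-- Covering number: the minimal number of closed balls of radius `ρ`
(with arbitrary centers) needed to cover `Ω`. -/
noncomputable def coveringNumber {X : Type*} [PseudoMetricSpace X] (Ω : Set X) (ρ : ℝ) : ℕ :=
  sInf {k : ℕ | ∃ C : Finset X, C.card = k ∧ Ω ⊆ ⋃ c ∈ C, Metric.closedBall c ρ}

/-- Lower Minkowski dimension: `liminf_{ρ → 0⁺} log N_Ω(ρ) / log (1/ρ)`. -/
noncomputable def lowerMinkowskiDim {X : Type*} [PseudoMetricSpace X] (Ω : Set X) : ℝ :=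
  Filter.liminf (fun ρ : ℝ => Real.log (coveringNumber Ω ρ) / Real.log (1 / ρ))
    (nhdsWithin 0 (Set.Ioi 0))

/-- The rank-one measurement `a* M (conj b) = ∑_{i,j} conj(a_i) M_{ij} conj(b_j)`. -/
noncomputable def rankOneMeas {m1 m2 : ℕ} (a : Fin m1 → ℂ) (b : Fin m2 → ℂ)
    (M : EuclideanSpace ℂ (Fin m1 × Fin m2)) : ℂ :=
  ∑ i : Fin m1, ∑ j : Fin m2, (starRingEnd ℂ) (a i) * M (i, j) * (starRingEnd ℂ) (b j)

open scoped ENNReal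

/-! ### Negative moments and the small-ball estimate -/

lemma lintegral_ball_enorm_rpow_neg_lt_top {s : ℝ} (hs2 : s < 2) :
    ∫⁻ z in Metric.ball (0 : ℂ) 1, ‖z‖ₑ ^ (-s) < ∞ := by
  have h : IntegrableOn (fun z : ℂ => ‖z‖ ^ (-s)) (Metric.ball 0 1) := by
    refine integrableOn_ball_of_norm_le_rpow (C := 1) (α := s) ?_ ?_ ?_ ?_
    · rw [Complex.finrank_real_complex]; norm_num
    · rw [Complex.finrank_real_complex]; exact_mod_cast hs2
    · refine Eventually.of_forall fun z => ?_
      rw [one_mul, Real.norm_of_nonneg (by positivity)]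
    · exact (measurable_norm.pow_const _).aestronglyMeasurable
  refine lt_of_eq_of_lt ?_ h.2
  refine lintegral_congr_ae (ae_restrict_of_ae ?_)
  have h0 : ∀ᵐ z : ℂ, z ≠ 0 := by simp [ae_iff]
  filter_upwards [h0] with z hz
  rw [Real.enorm_eq_ofReal (by positivity), ← ENNReal.ofReal_rpow_of_pos (norm_pos_iff.2 hz),
    ofReal_norm]

/-- The `(-s)`-th moment of an affine function of `conj z`, with `z` ranging over a disc,
is controlled by its slope alone. At slope `0` the right-hand side is `∞`, as `K ≠ 0`. -/
lemma exists_lintegral_affine_le {s : ℝ} (hs : 0 < s) (hs2 : s < 2) (R : ℝ) :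
    ∃ K : ℝ≥0∞, K ≠ 0 ∧ K ≠ ∞ ∧ ∀ v w : ℂ,
      ∫⁻ z in Metric.closedBall (0 : ℂ) R, ‖(starRingEnd ℂ) z * v + w‖ₑ ^ (-s)
        ≤ K * ‖v‖ₑ ^ (-s) := by
  set J := ∫⁻ z in Metric.ball (0 : ℂ) 1, ‖z‖ₑ ^ (-s) with hJ
  have hJt : J ≠ ∞ := (lintegral_ball_enorm_rpow_neg_lt_top hs2).ne
  have hV : volume (Metric.closedBall (0 : ℂ) R) ≠ ∞ := measure_closedBall_lt_top.ne
  refine ⟨volume (Metric.closedBall (0 : ℂ) R) + J + 1, by simp,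
    ENNReal.add_ne_top.2 ⟨ENNReal.add_ne_top.2 ⟨hV, hJt⟩, by simp⟩, fun v w => ?_⟩
  rcases eq_or_ne v 0 with rfl | hv
  · simp [ENNReal.zero_rpow_of_neg (neg_lt_zero.2 hs), ENNReal.mul_top]
  set u : ℂ := (starRingEnd ℂ) (w / v) with hu
  have hfac : ∀ z : ℂ, ‖(starRingEnd ℂ) z * v + w‖ₑ ^ (-s) = ‖z + u‖ₑ ^ (-s) * ‖v‖ₑ ^ (-s) := by
    intro z
    have : (starRingEnd ℂ) z * v + w = (starRingEnd ℂ) (z + u) * v := by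
      simp only [hu, map_add, Complex.conj_conj]; field_simp
    rw [this, enorm_mul, ENNReal.mul_rpow_of_ne_top (by simp) (by simp)]
    congr 2
    rw [← ofReal_norm, ← ofReal_norm, Complex.norm_conj]
  simp_rw [hfac]
  have hm : Measurable fun z : ℂ => ‖z + u‖ₑ ^ (-s) := by fun_prop
  rw [lintegral_mul_const _ hm]
  gcongr
  set g : ℂ → ℝ≥0∞ := (Metric.ball (0 : ℂ) 1).indicator fun z => ‖z‖ₑ ^ (-s) with hg
  have hgm : Measurable g := Measurable.indicator (by fun_prop) measurableSet_ball
  have hle : ∀ z : ℂ, ‖z + u‖ₑ ^ (-s) ≤ 1 + g (z + u) := by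
    intro z
    by_cases hz : z + u ∈ Metric.ball (0 : ℂ) 1
    · rw [hg, Set.indicator_of_mem hz]; exact le_add_self
    · refine le_add_right ?_
      rw [ENNReal.rpow_neg, ENNReal.inv_le_one]
      refine ENNReal.one_le_rpow ?_ hs
      simp only [Metric.mem_ball, dist_zero_right, not_lt] at hz
      rw [← ofReal_norm, ← ENNReal.ofReal_one]; exact ENNReal.ofReal_le_ofReal hz
  calc ∫⁻ z in Metric.closedBall (0 : ℂ) R, ‖z + u‖ₑ ^ (-s)
      ≤ ∫⁻ z in Metric.closedBall (0 : ℂ) R, (1 + g (z + u)) := lintegral_mono hle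
    _ = volume (Metric.closedBall (0 : ℂ) R) + ∫⁻ z in Metric.closedBall (0 : ℂ) R, g (z + u) := by
        rw [lintegral_add_left measurable_const]; simp
    _ ≤ volume (Metric.closedBall (0 : ℂ) R) + ∫⁻ z, g (z + u) := by
        gcongr; exact Measure.restrict_le_self
    _ = volume (Metric.closedBall (0 : ℂ) R) + J := by
        rw [lintegral_add_right_eq_self, hg, lintegral_indicator measurableSet_ball]
    _ ≤ _ := le_self_add

/-- Lebesgue measure on `ℂ^m` restricted to the polydisc of radius `R`. -/
noncomputable def polydiscMeasure (m : ℕ) (R : ℝ) : Measure (Fin m → ℂ) :=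
  Measure.pi fun _ => volume.restrict (Metric.closedBall (0 : ℂ) R)

instance (R : ℝ) : IsFiniteMeasure ((volume : Measure ℂ).restrict (Metric.closedBall 0 R)) :=
  ⟨by
    rw [Measure.restrict_apply_univ]
    exact measure_closedBall_lt_top⟩

instance (m : ℕ) (R : ℝ) : IsFiniteMeasure (polydiscMeasure m R) := by
  unfold polydiscMeasure; infer_instance

/-- Integrating out the single coordinate `i` of `a` already bounds the `(-s)`-th moment of the
linear form `∑ k, conj (a k) * v k` by that of the coefficient `v i`. -/
lemma exists_lintegral_linearForm_le {s : ℝ} (hs : 0 < s) (hs2 : s < 2) (R : ℝ) (m : ℕ) :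
    ∃ K : ℝ≥0∞, K ≠ 0 ∧ K ≠ ∞ ∧ ∀ (v : Fin m → ℂ) (i : Fin m),
      ∫⁻ a, ‖∑ k, (starRingEnd ℂ) (a k) * v k‖ₑ ^ (-s) ∂(polydiscMeasure m R)
        ≤ K * ‖v i‖ₑ ^ (-s) := by
  obtain ⟨K, hK0, hKt, hK⟩ := exists_lintegral_affine_le hs hs2 R
  cases m with
  | zero => exact ⟨1, by simp, by simp, fun v i => i.elim0⟩
  | succ m =>
  refine ⟨K * (polydiscMeasure m R Set.univ + 1), by simp [hK0],
    ENNReal.mul_ne_top hKt (by simp), fun v i => ?_⟩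
  set μ := (volume : Measure ℂ).restrict (Metric.closedBall 0 R) with hμ
  have hmp := (measurePreserving_piFinSuccAbove (fun _ : Fin (m + 1) => μ) i).symm
  have hf : Measurable fun a : Fin (m + 1) → ℂ =>
      ‖∑ k, (starRingEnd ℂ) (a k) * v k‖ₑ ^ (-s) := by
    have : Continuous fun a : Fin (m + 1) → ℂ => ∑ k, (starRingEnd ℂ) (a k) * v k := by fun_prop
    exact (this.measurable.enorm).pow_const _
  have hf' := hf.comp hmp.measurable
  rw [polydiscMeasure, ← hmp.lintegral_comp hf]
  refine (lintegral_prod_symm _ hf'.aemeasurable).trans_le ?_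
  calc _ ≤ ∫⁻ y : Fin m → ℂ, K * ‖v i‖ₑ ^ (-s) ∂(polydiscMeasure m R) := by
        refine lintegral_mono fun y => ?_
        refine le_trans (le_of_eq ?_)
          (hK (v i) (∑ k : Fin m, (starRingEnd ℂ) (y k) * v (i.succAbove k)))
        refine lintegral_congr fun z => ?_
        have hins : (MeasurableEquiv.piFinSuccAbove (fun _ : Fin (m + 1) => ℂ) i).symm (z, y) =
            i.insertNth z y := rfl
        simp only [Function.comp_apply]
        rw [Fin.sum_univ_succAbove _ i, hins]
        simp
    _ = K * ‖v i‖ₑ ^ (-s) * polydiscMeasure m R Set.univ := by rw [lintegral_const]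
    _ ≤ K * ‖v i‖ₑ ^ (-s) * (polydiscMeasure m R Set.univ + 1) := by gcongr; exact le_self_add
    _ = _ := by ring

lemma continuous_rankOneMeas {m1 m2 : ℕ} (M : EuclideanSpace ℂ (Fin m1 × Fin m2)) :
    Continuous fun p : (Fin m1 → ℂ) × (Fin m2 → ℂ) => rankOneMeas p.1 p.2 M := by
  unfold rankOneMeas; fun_prop

/-- The bilinear version: each nonzero entry of `M` controls the negative moments of the rank-one
measurement, by averaging first over `a` and then over `b`. -/
lemma exists_lintegral_rankOneMeas_le {s : ℝ} (hs : 0 < s) (hs2 : s < 2) (R : ℝ) (m1 m2 : ℕ) :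
    ∃ K : ℝ≥0∞, K ≠ ∞ ∧ ∀ (M : EuclideanSpace ℂ (Fin m1 × Fin m2)) (i : Fin m1) (j : Fin m2),
      ∫⁻ p, ‖rankOneMeas p.1 p.2 M‖ₑ ^ (-s) ∂((polydiscMeasure m1 R).prod (polydiscMeasure m2 R))
        ≤ K * ‖M (i, j)‖ₑ ^ (-s) := by
  obtain ⟨K₁, -, hK₁t, hK₁⟩ := exists_lintegral_linearForm_le hs hs2 R m1
  obtain ⟨K₂, -, hK₂t, hK₂⟩ := exists_lintegral_linearForm_le hs hs2 R m2
  refine ⟨K₁ * K₂, ENNReal.mul_ne_top hK₁t hK₂t, fun M i j => ?_⟩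
  have hm : Measurable fun p : (Fin m1 → ℂ) × (Fin m2 → ℂ) => ‖rankOneMeas p.1 p.2 M‖ₑ ^ (-s) :=
    (continuous_rankOneMeas M).measurable.enorm.pow_const _
  rw [lintegral_prod_symm _ hm.aemeasurable]
  have hexp : ∀ (a : Fin m1 → ℂ) (b : Fin m2 → ℂ), rankOneMeas a b M =
      ∑ k, (starRingEnd ℂ) (a k) * ∑ l, (starRingEnd ℂ) (b l) * M (k, l) := by
    intro a b
    simp only [rankOneMeas, Finset.mul_sum]
    exact Finset.sum_congr rfl fun _ _ => Finset.sum_congr rfl fun _ _ => by ring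
  have hm' : Measurable fun b : Fin m2 → ℂ =>
      ‖∑ l, (starRingEnd ℂ) (b l) * M (i, l)‖ₑ ^ (-s) := by
    have : Continuous fun b : Fin m2 → ℂ => ∑ l, (starRingEnd ℂ) (b l) * M (i, l) := by fun_prop
    exact this.measurable.enorm.pow_const _
  calc _ ≤ ∫⁻ b, K₁ * ‖∑ l, (starRingEnd ℂ) (b l) * M (i, l)‖ₑ ^ (-s)
            ∂(polydiscMeasure m2 R) := by
        refine lintegral_mono fun b => ?_
        simp_rw [hexp]
        exact hK₁ (fun k => ∑ l, (starRingEnd ℂ) (b l) * M (k, l)) i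
    _ = K₁ * ∫⁻ b, ‖∑ l, (starRingEnd ℂ) (b l) * M (i, l)‖ₑ ^ (-s)
            ∂(polydiscMeasure m2 R) := lintegral_const_mul _ hm'
    _ ≤ K₁ * (K₂ * ‖M (i, j)‖ₑ ^ (-s)) := by
        gcongr; exact hK₂ (fun l => M (i, l)) j
    _ = _ := by ring

lemma exists_entry_ge {m1 m2 : ℕ} (M : EuclideanSpace ℂ (Fin m1 × Fin m2)) {η : ℝ} (hη : 0 < η)
    (hM : η ≤ ‖M‖) : ∃ i j, η / (m1 * m2 + 1) ≤ ‖M (i, j)‖ := by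
  by_contra! h
  have h1 : ‖M‖ ≤ ∑ p : Fin m1 × Fin m2, ‖M p‖ := by
    rw [EuclideanSpace.norm_eq, Real.sqrt_le_left (by positivity)]
    exact Finset.sum_sq_le_sq_sum_of_nonneg fun _ _ => norm_nonneg _
  have h2 : ∑ p : Fin m1 × Fin m2, ‖M p‖ ≤ ∑ p : Fin m1 × Fin m2, η / (m1 * m2 + 1 : ℝ) :=
    Finset.sum_le_sum fun p _ => (h p.1 p.2).le
  simp only [Finset.sum_const, Finset.card_univ, Fintype.card_prod, Fintype.card_fin,
    nsmul_eq_mul, Nat.cast_mul] at h2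
  have : (m1 * m2 : ℝ) * (η / (m1 * m2 + 1)) < η := by
    rw [mul_div_assoc', div_lt_iff₀ (by positivity)]; nlinarith
  linarith

/-- Small-ball estimate: Markov's inequality for the `(-s)`-th moment. -/
lemma exists_smallBall {s : ℝ} (hs : 0 < s) (hs2 : s < 2) (R : ℝ) (m1 m2 : ℕ) {η : ℝ}
    (hη : 0 < η) :
    ∃ K : ℝ≥0∞, K ≠ ∞ ∧ ∀ (M : EuclideanSpace ℂ (Fin m1 × Fin m2)), η ≤ ‖M‖ → ∀ δ : ℝ, 0 < δ →
      (polydiscMeasure m1 R).prod (polydiscMeasure m2 R) {p | ‖rankOneMeas p.1 p.2 M‖ ≤ δ}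
        ≤ K * ENNReal.ofReal (δ ^ s) := by
  obtain ⟨K, hKt, hK⟩ := exists_lintegral_rankOneMeas_le hs hs2 R m1 m2
  set θ : ℝ := η / (m1 * m2 + 1) with hθ
  have hθ0 : 0 < θ := by positivity
  refine ⟨K * ENNReal.ofReal θ ^ (-s), ENNReal.mul_ne_top hKt ?_, fun M hM δ hδ => ?_⟩
  · rw [ENNReal.ofReal_rpow_of_pos hθ0]; exact ENNReal.ofReal_ne_top
  obtain ⟨i, j, hij⟩ := exists_entry_ge M hη hM
  have hm : Measurable fun p : (Fin m1 → ℂ) × (Fin m2 → ℂ) => ‖rankOneMeas p.1 p.2 M‖ₑ ^ (-s) :=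
    (continuous_rankOneMeas M).measurable.enorm.pow_const _
  have hδ' : ENNReal.ofReal (δ ^ s) * ENNReal.ofReal δ ^ (-s) = 1 := by
    rw [ENNReal.ofReal_rpow_of_pos hδ, ← ENNReal.ofReal_mul (by positivity),
      ← Real.rpow_add hδ]
    simp
  have hanti : ∀ x y : ℝ≥0∞, x ≤ y → y ^ (-s) ≤ x ^ (-s) := fun x y hxy => by
    rw [ENNReal.rpow_neg, ENNReal.rpow_neg]
    exact ENNReal.inv_le_inv.2 (ENNReal.rpow_le_rpow hxy hs.le)
  set P := (polydiscMeasure m1 R).prod (polydiscMeasure m2 R)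
  have hsub : {p : (Fin m1 → ℂ) × (Fin m2 → ℂ) | ‖rankOneMeas p.1 p.2 M‖ ≤ δ} ⊆
      {p | ENNReal.ofReal δ ^ (-s) ≤ ‖rankOneMeas p.1 p.2 M‖ₑ ^ (-s)} := fun p hp => by
    refine hanti _ _ ?_
    rw [← ofReal_norm]; exact ENNReal.ofReal_le_ofReal hp
  calc P {p | ‖rankOneMeas p.1 p.2 M‖ ≤ δ}
      ≤ P {p | ENNReal.ofReal δ ^ (-s) ≤ ‖rankOneMeas p.1 p.2 M‖ₑ ^ (-s)} := measure_mono hsub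
    _ = ENNReal.ofReal (δ ^ s) * (ENNReal.ofReal δ ^ (-s) *
          P {p | ENNReal.ofReal δ ^ (-s) ≤ ‖rankOneMeas p.1 p.2 M‖ₑ ^ (-s)}) := by
        rw [← mul_assoc, hδ', one_mul]
    _ ≤ ENNReal.ofReal (δ ^ s) * (K * ‖M (i, j)‖ₑ ^ (-s)) := by
        gcongr ENNReal.ofReal (δ ^ s) * ?_
        exact (mul_meas_ge_le_lintegral hm _).trans (hK M i j)
    _ ≤ ENNReal.ofReal (δ ^ s) * (K * ENNReal.ofReal θ ^ (-s)) := by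
        gcongr 2
        refine hanti _ _ ?_
        rw [← ofReal_norm]; exact ENNReal.ofReal_le_ofReal hij
    _ = _ := by ring

/-! ### The measure on tuples -/

/-- The unnormalized law of `n` independent pairs uniform on polydiscs of radius `R`, in the
coordinates `((a_1, …, a_n), (b_1, …, b_n))`. It is Lebesgue measure restricted to a box
(`tupleMeasure_eq_restrict`). -/
noncomputable def tupleMeasure (n m1 m2 : ℕ) (R : ℝ) :
    Measure ((Fin n → Fin m1 → ℂ) × (Fin n → Fin m2 → ℂ)) :=
  (Measure.pi fun _ => polydiscMeasure m1 R).prod (Measure.pi fun _ => polydiscMeasure m2 R)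

lemma tupleMeasure_forall (n m1 m2 : ℕ) (R : ℝ) (S : Set ((Fin m1 → ℂ) × (Fin m2 → ℂ))) :
    tupleMeasure n m1 m2 R {ab | ∀ j, (ab.1 j, ab.2 j) ∈ S} =
      ((polydiscMeasure m1 R).prod (polydiscMeasure m2 R) S) ^ n := by
  have hmp := measurePreserving_arrowProdEquivProdArrow (Fin m1 → ℂ) (Fin m2 → ℂ) (Fin n)
    (fun _ => polydiscMeasure m1 R) (fun _ => polydiscMeasure m2 R)
  rw [tupleMeasure, ← hmp.measure_preimage_equiv]
  have : (MeasurableEquiv.arrowProdEquivProdArrow (Fin m1 → ℂ) (Fin m2 → ℂ) (Fin n)) ⁻¹'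
      {ab | ∀ j, (ab.1 j, ab.2 j) ∈ S} = Set.univ.pi fun _ => S := by
    ext f
    simp [MeasurableEquiv.arrowProdEquivProdArrow, Equiv.arrowProdEquivProdArrow]
  rw [this, Measure.pi_pi]
  simp

lemma tupleMeasure_eq_restrict (n m1 m2 : ℕ) (R : ℝ) :
    tupleMeasure n m1 m2 R = volume.restrict
      ((Set.univ.pi fun _ => Set.univ.pi fun _ => Metric.closedBall (0 : ℂ) R) ×ˢ
        (Set.univ.pi fun _ => Set.univ.pi fun _ => Metric.closedBall (0 : ℂ) R)) := by
  have h : ∀ m, polydiscMeasure m R =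
      volume.restrict (Set.univ.pi fun _ => Metric.closedBall (0 : ℂ) R) := fun m => by
    rw [polydiscMeasure, volume_pi, Measure.restrict_pi_pi]
  simp only [tupleMeasure, h, ← Measure.restrict_pi_pi, Measure.prod_restrict]
  rfl

lemma rankOneMeas_sub {m1 m2 : ℕ} (a : Fin m1 → ℂ) (b : Fin m2 → ℂ)
    (M M' : EuclideanSpace ℂ (Fin m1 × Fin m2)) :
    rankOneMeas a b (M - M') = rankOneMeas a b M - rankOneMeas a b M' := by
  simp only [rankOneMeas, ← Finset.sum_sub_distrib, PiLp.sub_apply]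
  exact Finset.sum_congr rfl fun _ _ => Finset.sum_congr rfl fun _ _ => by ring

lemma norm_rankOneMeas_le {m1 m2 : ℕ} {R : ℝ} (hR : 0 ≤ R) {a : Fin m1 → ℂ} {b : Fin m2 → ℂ}
    (ha : ∀ i, ‖a i‖ ≤ R) (hb : ∀ i, ‖b i‖ ≤ R) (M : EuclideanSpace ℂ (Fin m1 × Fin m2)) :
    ‖rankOneMeas a b M‖ ≤ m1 * m2 * R ^ 2 * ‖M‖ := by
  have h : ∀ i j, ‖(starRingEnd ℂ) (a i) * M (i, j) * (starRingEnd ℂ) (b j)‖ ≤ R ^ 2 * ‖M‖ := by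
    intro i j
    rw [norm_mul, norm_mul, Complex.norm_conj, Complex.norm_conj]
    calc ‖a i‖ * ‖M (i, j)‖ * ‖b j‖ ≤ R * ‖M‖ * R := by
          gcongr
          · exact ha i
          · exact PiLp.norm_apply_le M (i, j)
          · exact hb j
      _ = _ := by ring
  calc ‖rankOneMeas a b M‖ ≤ ∑ i : Fin m1, ∑ j : Fin m2, R ^ 2 * ‖M‖ :=
        norm_sum_le_of_le _ fun i _ => norm_sum_le_of_le _ fun j _ => h i j
    _ = _ := by simp; ring

/-! ### Covering numbers -/

/-- Iterating a cover of the unit ball by `k` balls of radius `1/2`, rescaled at each step. -/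
lemma exists_dyadic_cover (E : Type*) [NormedAddCommGroup E] [NormedSpace ℝ E] [ProperSpace E] :
    ∃ k : ℕ, 0 < k ∧ ∀ i : ℕ, ∃ C : Finset E, C.card ≤ k ^ i ∧
      Metric.closedBall (0 : E) 1 ⊆ ⋃ c ∈ C, Metric.closedBall c ((1 / 2 : ℝ) ^ i) := by
  classical
  obtain ⟨T, -, hTf, hT⟩ := (isCompact_closedBall (0 : E) 1).finite_cover_balls
    (e := 1 / 2) (by norm_num)
  lift T to Finset E using hTf
  refine ⟨T.card, ?_, fun i => ?_⟩
  · rw [Finset.card_pos]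
    have := hT (Metric.mem_closedBall_self zero_le_one)
    simp only [Set.mem_iUnion] at this
    obtain ⟨t, ht, -⟩ := this
    exact ⟨t, ht⟩
  induction i with
  | zero => exact ⟨{0}, by simp, by simp⟩
  | succ i ih =>
    obtain ⟨C, hC, hcov⟩ := ih
    refine ⟨(C ×ˢ T).image fun p => p.1 + (1 / 2 : ℝ) ^ i • p.2, ?_, fun x hx => ?_⟩
    · refine Finset.card_image_le.trans ?_
      rw [Finset.card_product, pow_succ]
      gcongr
    · have h1 := hcov hx
      simp only [Set.mem_iUnion, Metric.mem_closedBall, dist_eq_norm, exists_prop] at h1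
      obtain ⟨c, hc, hxc⟩ := h1
      have hp : (0 : ℝ) < (1 / 2) ^ i := by positivity
      have hy : ((1 / 2 : ℝ) ^ i)⁻¹ • (x - c) ∈ Metric.closedBall (0 : E) 1 := by
        rw [mem_closedBall_zero_iff, norm_smul, Real.norm_of_nonneg (by positivity),
          inv_mul_le_iff₀ hp, mul_one]
        exact hxc
      have h2 := hT hy
      simp only [Set.mem_iUnion, Metric.mem_ball, dist_eq_norm, exists_prop] at h2
      obtain ⟨t, ht, hyt⟩ := h2
      simp only [Set.mem_iUnion, Metric.mem_closedBall, dist_eq_norm, exists_prop]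
      refine ⟨_, Finset.mem_image_of_mem _ (Finset.mk_mem_product hc ht), ?_⟩
      have : x - (c + (1 / 2 : ℝ) ^ i • t) =
          (1 / 2 : ℝ) ^ i • (((1 / 2 : ℝ) ^ i)⁻¹ • (x - c) - t) := by
        rw [smul_sub, smul_inv_smul₀ hp.ne']; abel
      simp only [this]
      rw [norm_smul, Real.norm_of_nonneg hp.le, pow_succ]
      gcongr

/-- For a subset of the unit ball the infimum defining the covering number is attained, so it is
not the junk value `sInf ∅ = 0`. -/
lemma exists_cover_card_eq {E : Type*} [NormedAddCommGroup E] [NormedSpace ℝ E] [ProperSpace E]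
    {S : Set E} (hS : S ⊆ Metric.closedBall 0 1) {ρ : ℝ} (hρ : 0 < ρ) :
    ∃ C : Finset E, C.card = coveringNumber S ρ ∧ S ⊆ ⋃ c ∈ C, Metric.closedBall c ρ := by
  obtain ⟨k, -, hk⟩ := exists_dyadic_cover E
  obtain ⟨i, hi⟩ := exists_pow_lt_of_lt_one hρ (by norm_num : (1 / 2 : ℝ) < 1)
  obtain ⟨C, -, hC⟩ := hk i
  exact Nat.sInf_mem (s := {k : ℕ | ∃ C : Finset E, C.card = k ∧
    S ⊆ ⋃ c ∈ C, Metric.closedBall c ρ}) (Set.nonempty_of_mem (x := C.card)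
      ⟨C, rfl, hS.trans <| hC.trans <|
        Set.iUnion₂_mono fun c _ => Metric.closedBall_subset_closedBall hi.le⟩)

/-- If the lower Minkowski dimension is below `d`, then `N(ρ) ≤ ρ ^ (-d)` at arbitrarily small
scales. The dyadic covers bound the quotient along `ρ = 2 ^ (-i)`, which keeps the real-valued
`liminf` from being a junk value. -/
lemma frequently_coveringNumber_le {E : Type*} [NormedAddCommGroup E] [NormedSpace ℝ E]
    [ProperSpace E] {S : Set E} (hS : S ⊆ Metric.closedBall 0 1) {d : ℝ}
    (hd : lowerMinkowskiDim S < d) :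
    ∃ᶠ ρ in nhdsWithin (0 : ℝ) (Set.Ioi 0), (coveringNumber S ρ : ℝ) ≤ ρ ^ (-d) := by
  obtain ⟨k, hk0, hk⟩ := exists_dyadic_cover E
  have hlim : Tendsto (fun i : ℕ => (1 / 2 : ℝ) ^ i) atTop (nhdsWithin 0 (Set.Ioi 0)) :=
    tendsto_nhdsWithin_iff.2 ⟨tendsto_pow_atTop_nhds_zero_of_lt_one (by norm_num) (by norm_num),
      Eventually.of_forall fun i => Set.mem_Ioi.2 (by positivity)⟩
  have hfreq : ∃ᶠ ρ in nhdsWithin (0 : ℝ) (Set.Ioi 0),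
      Real.log (coveringNumber S ρ) / Real.log (1 / ρ) ≤ Real.log k / Real.log 2 := by
    refine hlim.frequently (Eventually.frequently ?_)
    filter_upwards [eventually_ge_atTop 1] with i hi
    obtain ⟨C, hCc, hC⟩ := hk i
    have hN : coveringNumber S ((1 / 2 : ℝ) ^ i) ≤ k ^ i :=
      (Nat.sInf_le (s := {k : ℕ | ∃ C : Finset E, C.card = k ∧
        S ⊆ ⋃ c ∈ C, Metric.closedBall c ((1 / 2 : ℝ) ^ i)}) (m := C.card)
        (Set.mem_ofPred_eq ▸ ⟨C, rfl, hS.trans hC⟩)).trans hCc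
    have hl2 : 0 < Real.log 2 := Real.log_pos (by norm_num)
    have hi' : (0 : ℝ) < i := by exact_mod_cast hi
    have h1 : Real.log (1 / (1 / 2 : ℝ) ^ i) = i * Real.log 2 := by
      rw [← one_div_pow, one_div_one_div, Real.log_pow]
    have h2 : Real.log (coveringNumber S ((1 / 2 : ℝ) ^ i)) ≤ i * Real.log k := by
      rcases Nat.eq_zero_or_pos (coveringNumber S ((1 / 2 : ℝ) ^ i)) with h0 | h0
      · rw [h0]; simp only [Nat.cast_zero, Real.log_zero]
        exact mul_nonneg hi'.le (Real.log_natCast_nonneg k)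
      · rw [← Real.log_pow]
        exact Real.log_le_log (by exact_mod_cast h0) (by exact_mod_cast hN)
    rw [h1, div_le_div_iff₀ (by positivity) hl2]
    nlinarith
  have hlt := frequently_lt_of_liminf_lt (IsCoboundedUnder.of_frequently_le hfreq) hd
  have hsmall : ∀ᶠ ρ in nhdsWithin (0 : ℝ) (Set.Ioi 0), ρ ∈ Set.Ioo (0 : ℝ) 1 :=
    Ioo_mem_nhdsGT one_pos
  refine (hlt.and_eventually hsmall).mono ?_
  rintro ρ ⟨hρ, hρ0, hρ1⟩
  have hlog : 0 < Real.log (1 / ρ) := Real.log_pos (by rw [lt_div_iff₀ hρ0]; linarith)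
  rw [div_lt_iff₀ hlog, one_div, Real.log_inv] at hρ
  rcases Nat.eq_zero_or_pos (coveringNumber S ρ) with h0 | h0
  · rw [h0]; simp only [Nat.cast_zero]; positivity
  · have h0' : (0 : ℝ) < coveringNumber S ρ := by exact_mod_cast h0
    rw [Real.rpow_def_of_pos hρ0, ← Real.log_le_iff_le_exp h0']
    linarith

/-! ### The exceptional set -/

/-- The part of the exceptional set with all vectors in the polydisc of radius `R` and with a
witness `M` of norm at most `K` at distance at least `η` from `M0`. -/
def badSet (n : ℕ) {m1 m2 : ℕ} (Ω : Set (EuclideanSpace ℂ (Fin m1 × Fin m2)))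
    (M0 : EuclideanSpace ℂ (Fin m1 × Fin m2)) (R K η : ℝ) :
    Set ((Fin n → Fin m1 → ℂ) × (Fin n → Fin m2 → ℂ)) :=
  {ab | (∀ j i, ‖ab.1 j i‖ ≤ R) ∧ (∀ j i, ‖ab.2 j i‖ ≤ R) ∧ ∃ M ∈ Ω, ‖M‖ ≤ K ∧ η ≤ ‖M - M0‖ ∧
    ∀ j, rankOneMeas (ab.1 j) (ab.2 j) M = rankOneMeas (ab.1 j) (ab.2 j) M0}

/-- Union bound over a cover `C` of `Ω_B`: near each witness `M` there is some `K • c` with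
`c ∈ C`, and the measurements of `K • c - M0` are then `O(ρ)`. -/
lemma tupleMeasure_badSet_le {n m1 m2 : ℕ} {Ω : Set (EuclideanSpace ℂ (Fin m1 × Fin m2))}
    (hcone : ∀ M ∈ Ω, ∀ σ : ℝ, 0 < σ → (σ : ℂ) • M ∈ Ω)
    (M0 : EuclideanSpace ℂ (Fin m1 × Fin m2)) {R K η ρ A : ℝ} (hR : 0 ≤ R) (hK : 0 < K)
    (hρη : K * ρ ≤ η / 2) (hρ : 0 ≤ ρ) (hA : m1 * m2 * R ^ 2 * K ≤ A)
    {p : ℝ≥0∞} (hp : ∀ M : EuclideanSpace ℂ (Fin m1 × Fin m2), η / 2 ≤ ‖M‖ →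
      (polydiscMeasure m1 R).prod (polydiscMeasure m2 R)
        {q | ‖rankOneMeas q.1 q.2 M‖ ≤ A * ρ} ≤ p)
    {C : Finset (EuclideanSpace ℂ (Fin m1 × Fin m2))}
    (hC : Ω ∩ Metric.closedBall 0 1 ⊆ ⋃ c ∈ C, Metric.closedBall c ρ) :
    tupleMeasure n m1 m2 R (badSet n Ω M0 R K η) ≤ C.card * p ^ n := by
  classical
  set X : EuclideanSpace ℂ (Fin m1 × Fin m2) → EuclideanSpace ℂ (Fin m1 × Fin m2) :=
    fun c => (K : ℂ) • c - M0 with hX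
  set C' := C.filter fun c => η / 2 ≤ ‖X c‖ with hC'
  set T : EuclideanSpace ℂ (Fin m1 × Fin m2) →
      Set ((Fin n → Fin m1 → ℂ) × (Fin n → Fin m2 → ℂ)) :=
    fun c => {ab | ∀ j, (ab.1 j, ab.2 j) ∈ {q : (Fin m1 → ℂ) × (Fin m2 → ℂ) |
      ‖rankOneMeas q.1 q.2 (X c)‖ ≤ A * ρ}} with hT
  have hnK : ‖(K : ℂ)‖ = K := by rw [Complex.norm_real, Real.norm_of_nonneg hK.le]
  have hK0 : (K : ℂ) ≠ 0 := by exact_mod_cast hK.ne'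
  have hsub : badSet n Ω M0 R K η ⊆ ⋃ c ∈ C', T c := by
    rintro ab ⟨ha, hb, M, hM, hMK, hMη, hmeas⟩
    have hM' : ((K⁻¹ : ℝ) : ℂ) • M ∈ Ω ∩ Metric.closedBall 0 1 := by
      refine ⟨hcone M hM _ (inv_pos.2 hK), ?_⟩
      rw [mem_closedBall_zero_iff, norm_smul, Complex.norm_real, norm_inv,
        Real.norm_of_nonneg hK.le, inv_mul_le_iff₀ hK, mul_one]
      exact hMK
    have h1 := hC hM'
    simp only [Set.mem_iUnion, Metric.mem_closedBall, dist_eq_norm, exists_prop] at h1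
    obtain ⟨c, hc, hcρ⟩ := h1
    have hclose : ‖(K : ℂ) • c - M‖ ≤ K * ρ := by
      have : (K : ℂ) • c - M = -((K : ℂ) • (((K⁻¹ : ℝ) : ℂ) • M - c)) := by
        rw [smul_sub, Complex.ofReal_inv, smul_inv_smul₀ hK0]; abel
      rw [this, norm_neg, norm_smul, hnK]
      gcongr
    have hXc : η / 2 ≤ ‖X c‖ := by
      have h3 : ‖M - M0‖ ≤ ‖X c‖ + ‖(K : ℂ) • c - M‖ := by
        have : M - M0 = X c - ((K : ℂ) • c - M) := by simp only [hX]; abel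
        rw [this]; exact norm_sub_le _ _
      linarith
    simp only [Set.mem_iUnion, exists_prop]
    refine ⟨c, Finset.mem_filter.2 ⟨hc, hXc⟩, fun j => ?_⟩
    have h4 : rankOneMeas (ab.1 j) (ab.2 j) (X c) =
        rankOneMeas (ab.1 j) (ab.2 j) ((K : ℂ) • c - M) := by
      rw [hX, rankOneMeas_sub, rankOneMeas_sub, hmeas j]
    simp only [Set.mem_ofPred_eq, h4]
    calc _ ≤ m1 * m2 * R ^ 2 * ‖(K : ℂ) • c - M‖ := norm_rankOneMeas_le hR (ha j) (hb j) _
      _ ≤ m1 * m2 * R ^ 2 * (K * ρ) := by gcongr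
      _ = m1 * m2 * R ^ 2 * K * ρ := by ring
      _ ≤ A * ρ := by gcongr
  calc tupleMeasure n m1 m2 R (badSet n Ω M0 R K η)
      ≤ tupleMeasure n m1 m2 R (⋃ c ∈ C', T c) := measure_mono hsub
    _ ≤ ∑ c ∈ C', tupleMeasure n m1 m2 R (T c) := measure_biUnion_finset_le _ _
    _ ≤ ∑ c ∈ C', p ^ n := by
        refine Finset.sum_le_sum fun c hc => ?_
        rw [hT, tupleMeasure_forall]
        gcongr
        exact hp _ (Finset.mem_filter.1 hc).2
    _ = C'.card * p ^ n := by rw [Finset.sum_const, nsmul_eq_mul]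
    _ ≤ C.card * p ^ n := by gcongr; exact Finset.filter_subset _ _

/-- With `N(ρ) ≤ ρ ^ (-d)` and small-ball probability `O(ρ ^ s)` per measurement, the union bound is
`O(ρ ^ (s * n - d))`, which vanishes along the good scales as soon as `s * n > d`. -/
lemma volume_badSet_eq_zero {n m1 m2 : ℕ} (hn : 0 < n)
    {Ω : Set (EuclideanSpace ℂ (Fin m1 × Fin m2))}
    (hcone : ∀ M ∈ Ω, ∀ σ : ℝ, 0 < σ → (σ : ℂ) • M ∈ Ω)
    (M0 : EuclideanSpace ℂ (Fin m1 × Fin m2))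
    (hdim : lowerMinkowskiDim (Ω ∩ Metric.closedBall 0 1) < 2 * n)
    {R K η : ℝ} (hR : 0 ≤ R) (hK : 0 < K) (hη : 0 < η) :
    volume (badSet n Ω M0 R K η) = 0 := by
  have hn' : (0 : ℝ) < n := by exact_mod_cast hn
  obtain ⟨d, hd0, hLd, hdn⟩ : ∃ d : ℝ, 0 ≤ d ∧
      lowerMinkowskiDim (Ω ∩ Metric.closedBall 0 1) < d ∧ d < 2 * n := by
    obtain ⟨d, h1, h2⟩ := exists_between (max_lt hdim (by positivity : (0 : ℝ) < 2 * n))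
    exact ⟨d, ((le_max_right _ _).trans_lt h1).le, (le_max_left _ _).trans_lt h1, h2⟩
  -- an exponent with `d / n < s < 2`
  obtain ⟨s, hds, hs2⟩ := exists_between (show d / n < 2 by rwa [div_lt_iff₀ hn'])
  have hs : 0 < s := (div_nonneg hd0 hn'.le).trans_lt hds
  rw [div_lt_iff₀ hn'] at hds
  set A : ℝ := m1 * m2 * R ^ 2 * K + 1 with hA
  have hA0 : 0 < A := by positivity
  obtain ⟨B, hBt, hB⟩ := exists_smallBall hs hs2 R m1 m2 (half_pos hη)
  have hQ : tupleMeasure n m1 m2 R (badSet n Ω M0 R K η) ≤ 0 := by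
    have hlim : Tendsto (fun ρ : ℝ => B ^ n * ENNReal.ofReal (A ^ (s * n) * ρ ^ (s * n - d)))
        (nhdsWithin 0 (Set.Ioi 0)) (nhds 0) := by
      have h1 : Tendsto (fun ρ : ℝ => A ^ (s * n) * ρ ^ (s * n - d))
          (nhdsWithin 0 (Set.Ioi 0)) (nhds 0) := by
        have := ((Real.continuousAt_rpow_const 0 (s * n - d) (Or.inr (by linarith))).tendsto.const_mul
          (A ^ (s * n)))
        rw [Real.zero_rpow (by linarith), mul_zero] at this
        exact this.mono_left nhdsWithin_le_nhds
      have h2 := ENNReal.Tendsto.const_mul (a := B ^ n) (ENNReal.tendsto_ofReal h1)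
        (Or.inr (ENNReal.pow_ne_top hBt))
      simpa using h2
    refine ge_of_tendsto_of_frequently hlim ?_
    have hsmall : ∀ᶠ ρ in nhdsWithin (0 : ℝ) (Set.Ioi 0), ρ ∈ Set.Ioo (0 : ℝ) (η / 2 / K) :=
      Ioo_mem_nhdsGT (by positivity)
    refine ((frequently_coveringNumber_le Set.inter_subset_right hLd).and_eventually hsmall).mono ?_
    rintro ρ ⟨hN, hρ0, hρ1⟩
    obtain ⟨C, hCc, hC⟩ := exists_cover_card_eq
      (S := Ω ∩ Metric.closedBall 0 1) Set.inter_subset_right hρ0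
    have hρη : K * ρ ≤ η / 2 := by
      rw [lt_div_iff₀ hK] at hρ1; linarith
    refine (tupleMeasure_badSet_le hcone M0 hR hK hρη hρ0.le (le_add_of_nonneg_right zero_le_one)
      (fun M hM => hB M hM (A * ρ) (by positivity)) hC).trans ?_
    have hcard : (C.card : ℝ≥0∞) ≤ ENNReal.ofReal (ρ ^ (-d)) := by
      rw [hCc, ← ENNReal.ofReal_natCast]
      exact ENNReal.ofReal_le_ofReal hN
    calc (C.card : ℝ≥0∞) * (B * ENNReal.ofReal ((A * ρ) ^ s)) ^ n
        ≤ ENNReal.ofReal (ρ ^ (-d)) * (B * ENNReal.ofReal ((A * ρ) ^ s)) ^ n := by gcongr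
      _ = B ^ n * ENNReal.ofReal (ρ ^ (-d) * ((A * ρ) ^ s) ^ n) := by
          rw [mul_pow, ENNReal.ofReal_mul (by positivity), ENNReal.ofReal_pow (by positivity)]
          ring
      _ = B ^ n * ENNReal.ofReal (A ^ (s * n) * ρ ^ (s * n - d)) := by
          congr 2
          rw [← Real.rpow_mul_natCast (by positivity), Real.mul_rpow hA0.le hρ0.le,
            sub_eq_add_neg, Real.rpow_add hρ0]
          ring
  rw [tupleMeasure_eq_restrict] at hQ
  refine le_antisymm (le_trans ?_ hQ) zero_le
  refine le_trans (measure_mono fun ab hab => ?_) (Measure.le_restrict_apply _ _)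
  refine ⟨hab, ?_, ?_⟩
  · simpa using hab.1
  · simpa using hab.2.1

/-- Weak identifiability of cone-constrained matrix recovery from rank-one measurements:
if `Ω` is a nonempty cone and `2n` exceeds the lower Minkowski dimension of
`Ω_B = Ω ∩ {‖M‖_F ≤ 1}`, then for Lebesgue-almost all tuples `(a_j, b_j)`, any `M ∈ Ω` with
the same measurements as `M0 ∈ Ω` equals `M0`. -/
theorem weak_identifiability_cone (m1 m2 n : ℕ) (hn : 0 < n)
    (Ω : Set (EuclideanSpace ℂ (Fin m1 × Fin m2))) (hne : Ω.Nonempty)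
    (hcone : ∀ M ∈ Ω, ∀ σ : ℝ, 0 < σ → (σ : ℂ) • M ∈ Ω)
    (M0 : EuclideanSpace ℂ (Fin m1 × Fin m2)) (hM0 : M0 ∈ Ω)
    (hdim : lowerMinkowskiDim (Ω ∩ Metric.closedBall 0 1) < 2 * n) :
    ∀ᵐ ab : (Fin n → Fin m1 → ℂ) × (Fin n → Fin m2 → ℂ),
      ∀ M ∈ Ω, (∀ j : Fin n, rankOneMeas (ab.1 j) (ab.2 j) M =
          rankOneMeas (ab.1 j) (ab.2 j) M0) → M = M0 := by
  have hnull : ∀ N : ℕ, volume (badSet n Ω M0 (N + 1) (N + 1) (1 / (N + 1))) = 0 := fun N =>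
    volume_badSet_eq_zero hn hcone M0 hdim (by positivity) (by positivity) (by positivity)
  have hae : ∀ᵐ ab : (Fin n → Fin m1 → ℂ) × (Fin n → Fin m2 → ℂ),
      ∀ N : ℕ, ab ∉ badSet n Ω M0 (N + 1) (N + 1) (1 / (N + 1)) :=
    ae_all_iff.2 fun N => measure_eq_zero_iff_ae_notMem.1 (hnull N)
  filter_upwards [hae] with ab hab M hM hmeas
  by_contra hne'
  have hpos : 0 < ‖M - M0‖ := norm_pos_iff.2 (sub_ne_zero.2 hne')
  obtain ⟨N, hN⟩ := exists_nat_ge (max (max ‖ab.1‖ ‖ab.2‖) (max ‖M‖ (1 / ‖M - M0‖)))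
  simp only [max_le_iff] at hN
  obtain ⟨⟨h1, h2⟩, h3, h4⟩ := hN
  refine hab N ⟨fun j i => ?_, fun j i => ?_, M, hM, by linarith, ?_, hmeas⟩
  · linarith [norm_le_pi_norm (ab.1 j) i, norm_le_pi_norm ab.1 j]
  · linarith [norm_le_pi_norm (ab.2 j) i, norm_le_pi_norm ab.2 j]
  · rw [one_div_le (by positivity) hpos]; linarith
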